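/- Let n jobs be given, where job j has processing time p_j ∈ ℕ, weight w_j ∈ ℕ and due date d_j ∈ ℕ. For J ⊆ {1,…,n} and t ∈ ℕ, define OPT[J,t] ∈ ℕ as the minimum of ∑_{j∈J} w_j·max(0, C_j(π) − d_j) over all linear orderings π of J processed consecutively without idle time starting at time t, with OPT[∅,t] = 0. Then for every nonempty J ⊆ {1,…,n} and every t ∈ ℕ, OPT[J,t] = min_{j∈J} ( OPT[J∖{j}, t] + w_j·max(0, t + p(J) − d_j) ), where p(J) = ∑_{k∈J} p_k. -/

import Mathlib

/-- Total weighted tardiness of the jobs in the list, processed consecutively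
without idle time starting at time `t`, in the order given by the list
(`t + p j - d j` is the truncated subtraction on `ℕ`, i.e. `max 0 (C_j - d_j)`). -/
def tardCost {n : ℕ} (p w d : Fin n → ℕ) : ℕ → List (Fin n) → ℕ
  | _, [] => 0
  | t, j :: l => w j * ((t + p j) - d j) + tardCost p w d (t + p j) l

/-- `OPT p w d J t` : minimum total weighted tardiness over all orderings of `J`
processed consecutively without idle time starting at time `t`. -/
noncomputable def OPT {n : ℕ} (p w d : Fin n → ℕ) (J : Finset (Fin n)) (t : ℕ) : ℕ :=
  sInf { v : ℕ | ∃ l : List (Fin n), l.Nodup ∧ l.toFinset = J ∧ v = tardCost p w d t l }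

theorem tardCost_concat {n : ℕ} (p w d : Fin n → ℕ) (l : List (Fin n)) (j : Fin n) (t : ℕ) :
    tardCost p w d t (l ++ [j]) =
      tardCost p w d t l + w j * ((t + (l.map p).sum + p j) - d j) := by
  induction l generalizing t with
  | nil => simp [tardCost]
  | cons a l ih => simp [tardCost, ih, add_assoc]

/-- The cost of an ordering of `J` is its cost without the last job `j` plus the
weighted tardiness of `j`, which completes at time `t + p(J)`. -/
theorem tardCost_concat_of_toFinset_eq {n : ℕ} (p w d : Fin n → ℕ) {J : Finset (Fin n)}
    {l : List (Fin n)} {j : Fin n} (t : ℕ) (hl : l.Nodup) (hj : j ∈ J)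
    (hlJ : l.toFinset = J.erase j) :
    tardCost p w d t (l ++ [j]) =
      tardCost p w d t l + w j * ((t + ∑ k ∈ J, p k) - d j) := by
  rw [tardCost_concat, ← List.sum_toFinset p hl, hlJ, add_assoc, Finset.sum_erase_add J p hj]

theorem OPT_le_tardCost {n : ℕ} (p w d : Fin n → ℕ) {J : Finset (Fin n)} {l : List (Fin n)}
    (t : ℕ) (hl : l.Nodup) (hlJ : l.toFinset = J) : OPT p w d J t ≤ tardCost p w d t l :=
  Nat.sInf_le ⟨l, hl, hlJ, rfl⟩

theorem exists_OPT_eq_tardCost {n : ℕ} (p w d : Fin n → ℕ) (J : Finset (Fin n)) (t : ℕ) :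
    ∃ l : List (Fin n), l.Nodup ∧ l.toFinset = J ∧ OPT p w d J t = tardCost p w d t l :=
  Nat.sInf_mem (s := { v : ℕ | ∃ l : List (Fin n),
    l.Nodup ∧ l.toFinset = J ∧ v = tardCost p w d t l })
    ⟨_, J.toList, J.nodup_toList, J.toList_toFinset, rfl⟩

theorem stmt2 {n : ℕ} (p w d : Fin n → ℕ) (J : Finset (Fin n)) (hJ : J.Nonempty) (t : ℕ) :
    OPT p w d J t =
      sInf { v : ℕ | ∃ j ∈ J,
        v = OPT p w d (J.erase j) t + w j * ((t + ∑ k ∈ J, p k) - d j) } := by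
  apply le_antisymm
  · obtain ⟨i, hi⟩ := hJ
    refine le_csInf ⟨_, i, hi, rfl⟩ ?_
    rintro _ ⟨j, hj, rfl⟩
    obtain ⟨l, hl, hlJ, hopt⟩ := exists_OPT_eq_tardCost p w d (J.erase j) t
    have hjl : j ∉ l := by
      rw [← List.mem_toFinset, hlJ]
      exact Finset.notMem_erase j J
    rw [hopt, ← tardCost_concat_of_toFinset_eq p w d t hl hj hlJ]
    refine OPT_le_tardCost p w d t (List.nodup_append_comm.mp (List.nodup_cons.mpr ⟨hjl, hl⟩)) ?_
    rw [List.toFinset_append, hlJ]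
    ext k
    by_cases hk : k = j <;> simp [hk, hj]
  · obtain ⟨l, hl, hlJ, hopt⟩ := exists_OPT_eq_tardCost p w d J t
    rcases List.eq_nil_or_concat l with rfl | ⟨l, j, rfl⟩
    · simp [← hlJ] at hJ
    rw [List.concat_eq_append] at *
    obtain ⟨hjl, hl⟩ : j ∉ l ∧ l.Nodup :=
      List.nodup_cons.mp (List.nodup_append_comm.mp hl)
    have hj : j ∈ J := by simp [← hlJ]
    have herase : l.toFinset = J.erase j := by
      rw [← hlJ]
      ext k
      by_cases hk : k = j <;> simp [hk, hjl]
    rw [hopt, tardCost_concat_of_toFinset_eq p w d t hl hj herase]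
    refine le_trans (Nat.sInf_le ⟨j, hj, rfl⟩) ?_
    gcongr
    exact OPT_le_tardCost p w d t hl herase
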